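/- Let (X, 𝔅, μ, T) be an ergodic measure-preserving dynamical system and A ∈ 𝔅 with μ(A) > 0, and suppose the return time to A has exponential tails: there exist C > 0 and η ∈ (0,1) with μ(A ∩ {r_A > t}) ≤ C·η^t for all t ∈ ℕ. Let (E_n) be measurable sets with E_n ∩ A = ∅ for all n and with shadows E'_n = (E_n)'_A satisfying 0 < μ(E'_n) and μ(E'_n) → 0. Then μ(E'_n)·r_{E_n} → 0 in μ_{E'_n}-probability: for every ε > 0, μ_{E'_n}({x : r_{E_n}(x) ≥ ε/μ(E'_n)}) → 0 as n → ∞. -/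

import Mathlib

open MeasureTheory Filter Set ProbabilityTheory
open scoped ENNReal Topology ENat

noncomputable section

variable {X : Type*}

/-- The instant of the `i`-th visit (after time `0`) of the orbit of `x` under `T` to `B`,
with the convention that `hitInstant T B x 0 = 0` and the value is `⊤` if there is no
such visit. -/
def hitInstant (T : X → X) (B : Set X) (x : X) : ℕ → ℕ∞
  | 0 => 0
  | (i+1) => sInf {m : ℕ∞ | ∃ n : ℕ, hitInstant T B x i < (n : ℕ∞) ∧ T^[n] x ∈ B ∧ m = (n : ℕ∞)}

/-- The first hitting time `r_B(x) = inf {k ≥ 1 : T^k x ∈ B}` (with value `⊤` if the orbit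
never enters `B`). -/
def hitTime (T : X → X) (B : Set X) (x : X) : ℕ∞ := hitInstant T B x 1

/-- The `i`-th interarrival time (gap between the `i`-th and `(i+1)`-st visits);
`interGap T B 0 x` is the first hitting time `r_B^{(1)}(x)`, and once some
visit fails to occur, all subsequent gaps are `⊤`. -/
def interGap (T : X → X) (B : Set X) (i : ℕ) (x : X) : ℝ≥0∞ :=
  if hitInstant T B x i = ⊤ then ⊤
  else ((hitInstant T B x (i+1) - hitInstant T B x i : ℕ∞) : ℝ≥0∞)

/-- The shadow set `E'_A = ⋃_{k ≥ 0} (A ∩ {r_A > k} ∩ T^{-k} E)` of `E` in `A`. -/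
def shadow (T : X → X) (A E : Set X) : Set X :=
  ⋃ k : ℕ, A ∩ {x | (k : ℕ∞) < hitTime T A x} ∩ (T^[k]) ⁻¹' E

/-- The induced (first-return) map `T_A(x) = T^{r_A(x)}(x)` (junk value `x` if the orbit of
`x` never returns to `A`). -/
def inducedMap (T : X → X) (A : Set X) (x : X) : X :=
  T^[sInf {n : ℕ | 1 ≤ n ∧ T^[n] x ∈ A}] x

/-- The rescaled interarrival process `c · Φ_B : x ↦ (c · r_B^{(i)}(x))_{i ≥ 1}`,
as a random element of `ℕ → ℝ≥0∞`. -/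
def rescaledProcess (T : X → X) (B : Set X) (c : ℝ≥0∞) (x : X) : ℕ → ℝ≥0∞ :=
  fun i => c * interGap T B i x

/-- Convergence in distribution: the laws of the random elements `f n : X → (ℕ → ℝ≥0∞)`
under the measures `P n` converge weakly to `ν` (tested against bounded continuous
real functions, with `ℕ → ℝ≥0∞` carrying the product topology). -/
def ConvInDist [MeasurableSpace X] (P : ℕ → Measure X)
    (f : ℕ → X → (ℕ → ℝ≥0∞)) (ν : Measure (ℕ → ℝ≥0∞)) : Prop :=
  ∀ g : BoundedContinuousFunction (ℕ → ℝ≥0∞) ℝ,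
    Tendsto (fun n => ∫ x, g (f n x) ∂(P n)) atTop (𝓝 (∫ y, g y ∂ν))

end

/-!
Kac's inequality: for an invariant finite measure, `∫_A r_A dμ ≤ μ(X)`, because the sets
`T^{-(n-k)}(A ∩ {r_A > k})`, `k ≤ n`, which sort points by their last visit to `A` up to time `n`,
are disjoint. A point of the shadow of a set `E` disjoint from `A` enters `E` before it returns to
`A`, so `r_E ≤ r_A` there. Hence `μ(E'_n) ∫ r_{E_n} dμ_{E'_n} = ∫_{E'_n} r_{E_n} dμ` is at most the
integral of the integrable function `r_A` over sets whose measure tends to `0`; this gives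
convergence in mean, and Markov's inequality turns it into convergence in probability.
-/

section HittingTime

variable {X : Type*} {T : X → X} {A B E : Set X} {x : X}

theorem hitTime_le_of_iterate_mem {k : ℕ} (hk : 1 ≤ k) (hkB : T^[k] x ∈ B) :
    hitTime T B x ≤ k :=
  sInf_le ⟨k, Nat.cast_pos.2 hk, hkB, rfl⟩

theorem lt_hitTime_iff {k : ℕ} :
    (k : ℕ∞) < hitTime T B x ↔ ∀ j ∈ Icc 1 k, T^[j] x ∉ B := by
  refine ⟨fun h j hj hjB => ?_, fun h => ?_⟩
  · exact h.not_ge ((hitTime_le_of_iterate_mem hj.1 hjB).trans (Nat.cast_le.2 hj.2))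
  · rw [← ENat.add_one_le_iff (ENat.natCast_ne_top k)]
    refine le_sInf ?_
    rintro _ ⟨n, hn, hnB, rfl⟩
    have hkn : k < n := not_le.1 fun hnk => h n ⟨Nat.cast_pos.1 hn, hnk⟩ hnB
    exact_mod_cast hkn

theorem shadow_subset (T : X → X) (A E : Set X) : shadow T A E ⊆ A :=
  iUnion_subset fun _ _ hx => hx.1.1

theorem hitTime_lt_hitTime_of_mem_shadow (hEA : Disjoint E A) (hx : x ∈ shadow T A E) :
    hitTime T E x < hitTime T A x := by
  obtain ⟨k, ⟨hxA, hk⟩, hkE⟩ := mem_iUnion.1 hx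
  have hk0 : k ≠ 0 := by
    rintro rfl
    exact disjoint_left.1 hEA hkE hxA
  exact (hitTime_le_of_iterate_mem (Nat.one_le_iff_ne_zero.2 hk0) hkE).trans_lt hk

theorem pairwiseDisjoint_preimage_iterate_lt_hitTime (T : X → X) (A : Set X) (n : ℕ) :
    (Iic n).PairwiseDisjoint fun k => T^[n - k] ⁻¹' (A ∩ {x | (k : ℕ∞) < hitTime T A x}) := by
  intro j hj k hk hjk
  wlog hlt : j < k generalizing j k
  · exact (this hk hj hjk.symm (by omega)).symm
  refine disjoint_left.2 fun x ⟨hjA, _⟩ ⟨_, hk_lt⟩ => ?_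
  refine lt_hitTime_iff.1 hk_lt (k - j) ⟨by omega, by omega⟩ ?_
  have h_add : k - j + (n - k) = n - j := by grind
  rwa [← Function.iterate_add_apply, h_add]

theorem toENNReal_eq_tsum_ite (n : ℕ∞) :
    (n : ℝ≥0∞) = ∑' k : ℕ, if (k : ℕ∞) < n then 1 else 0 := by
  cases n with
  | top => simp
  | coe n =>
    rw [tsum_eq_sum (s := Finset.range n) (by simp +contextual),
      Finset.sum_ite_of_true (by simp)]
    simp

theorem toENNReal_hitTime_eq_tsum_indicator (T : X → X) (B : Set X) (x : X) :
    (hitTime T B x : ℝ≥0∞) =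
      ∑' k : ℕ, {y | (k : ℕ∞) < hitTime T B y}.indicator (1 : X → ℝ≥0∞) x := by
  simp only [toENNReal_eq_tsum_ite (hitTime T B x), indicator_apply, mem_ofPred_eq, Pi.one_apply]

end HittingTime

section Kac

variable {X : Type*} [MeasurableSpace X] {T : X → X} {μ : Measure X} {A B : Set X}

theorem measurableSet_lt_hitTime (hT : Measurable T) (hB : MeasurableSet B) (k : ℕ) :
    MeasurableSet {x | (k : ℕ∞) < hitTime T B x} := by
  have h_eq : {x | (k : ℕ∞) < hitTime T B x} = ⋂ j ∈ Icc 1 k, T^[j] ⁻¹' Bᶜ := by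
    ext x
    simp only [mem_ofPred_eq, lt_hitTime_iff, mem_iInter, mem_preimage, mem_compl_iff]
  rw [h_eq]
  exact .biInter (to_countable _) fun j _ => hT.iterate j hB.compl

theorem measurable_toENNReal_hitTime (hT : Measurable T) (hB : MeasurableSet B) :
    Measurable fun x => (hitTime T B x : ℝ≥0∞) := by
  simp_rw [toENNReal_hitTime_eq_tsum_indicator]
  exact .tsum fun k => measurable_one.indicator (measurableSet_lt_hitTime hT hB k)

theorem lintegral_hitTime_eq_tsum (hT : Measurable T) (hB : MeasurableSet B) :
    ∫⁻ x, hitTime T B x ∂μ = ∑' k : ℕ, μ {x | (k : ℕ∞) < hitTime T B x} := by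
  have h_meas := measurableSet_lt_hitTime hT hB
  simp_rw [toENNReal_hitTime_eq_tsum_indicator]
  rw [lintegral_tsum fun k => (measurable_one.indicator (h_meas k)).aemeasurable]
  simp_rw [lintegral_indicator_one (h_meas _)]

theorem sum_measure_inter_lt_hitTime_le (hT : MeasurePreserving T μ μ) (hA : MeasurableSet A)
    (n : ℕ) : ∑ k ∈ Finset.range n, μ (A ∩ {x | (k : ℕ∞) < hitTime T A x}) ≤ μ univ := by
  have h_meas (k : ℕ) : MeasurableSet (A ∩ {x | (k : ℕ∞) < hitTime T A x}) :=
    hA.inter (measurableSet_lt_hitTime hT.measurable hA k)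
  calc ∑ k ∈ Finset.range n, μ (A ∩ {x | (k : ℕ∞) < hitTime T A x})
      = ∑ k ∈ Finset.range n, μ (T^[n - k] ⁻¹' (A ∩ {x | (k : ℕ∞) < hitTime T A x})) :=
        Finset.sum_congr rfl fun k _ =>
          ((hT.iterate (n - k)).measure_preimage (h_meas k).nullMeasurableSet).symm
    _ ≤ μ univ :=
        sum_measure_le_measure_univ
          (fun k _ => (hT.measurable.iterate (n - k) (h_meas k)).nullMeasurableSet)
          ((pairwiseDisjoint_preimage_iterate_lt_hitTime T A n).subset
            fun _ hk => (Finset.mem_range.1 hk).le).aedisjoint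

theorem setLIntegral_hitTime_self_le_measure_univ (hT : MeasurePreserving T μ μ)
    (hA : MeasurableSet A) : ∫⁻ x in A, hitTime T A x ∂μ ≤ μ univ := by
  rw [lintegral_hitTime_eq_tsum hT.measurable hA, ENNReal.tsum_eq_iSup_nat]
  simp_rw [Measure.restrict_apply (measurableSet_lt_hitTime hT.measurable hA _), inter_comm _ A]
  exact iSup_le (sum_measure_inter_lt_hitTime_le hT hA)

end Kac

theorem tendsto_setLIntegral_hitTime_shadow {X ι : Type*} [MeasurableSpace X] {T : X → X}
    {μ : Measure X} [IsFiniteMeasure μ] (hT : MeasurePreserving T μ μ) {A : Set X}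
    (hA : MeasurableSet A) {E : ι → Set X} (hEA : ∀ i, Disjoint (E i) A) {l : Filter ι}
    (h0 : Tendsto (fun i => μ (shadow T A (E i))) l (𝓝 0)) :
    Tendsto (fun i => ∫⁻ x in shadow T A (E i), hitTime T (E i) x ∂μ) l (𝓝 0) := by
  have h_fin : ∫⁻ x in A, hitTime T A x ∂μ ≠ ∞ :=
    ne_top_of_le_ne_top (measure_ne_top μ univ)
      (setLIntegral_hitTime_self_le_measure_univ hT hA)
  have h_restrict : Tendsto (fun i => μ.restrict A (shadow T A (E i))) l (𝓝 0) := by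
    simpa only [Measure.restrict_eq_self μ (shadow_subset T A _)] using h0
  refine tendsto_of_tendsto_of_tendsto_of_le_of_le tendsto_const_nhds
    (tendsto_setLIntegral_zero h_fin h_restrict) (fun _ => zero_le) fun i => ?_
  rw [Measure.restrict_restrict_of_subset (shadow_subset T A (E i))]
  exact setLIntegral_mono (measurable_toENNReal_hitTime hT.measurable hA) fun x hx =>
    ENat.toENNReal_le.2 (hitTime_lt_hitTime_of_mem_shadow (hEA i) hx).le

theorem cond_ge_div_measure_le_setLIntegral_div {X : Type*} [MeasurableSpace X] {μ : Measure X}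
    {S : Set X} (hS : μ S ≠ 0) (hS_top : μ S ≠ ∞) {f : X → ℝ≥0∞} (hf : AEMeasurable f μ)
    {ε : ℝ≥0∞} (hε : ε ≠ 0) (hε_top : ε ≠ ∞) :
    μ[|S] {x | ε / μ S ≤ f x} ≤ (∫⁻ x in S, f x ∂μ) / ε :=
  calc μ[|S] {x | ε / μ S ≤ f x} ≤ (∫⁻ x, f x ∂μ[|S]) / (ε / μ S) :=
        meas_ge_le_lintegral_div (hf.mono_ac cond_absolutelyContinuous)
          (ENNReal.div_ne_zero.2 ⟨hε, hS_top⟩) (ENNReal.div_ne_top hε_top hS)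
    _ = (μ S)⁻¹ * (∫⁻ x in S, f x ∂μ) / ((μ S)⁻¹ * ε) := by
        rw [ProbabilityTheory.cond, lintegral_smul_measure, smul_eq_mul, div_eq_mul_inv ε,
          mul_comm ε]
    _ = (∫⁻ x in S, f x ∂μ) / ε :=
        ENNReal.mul_div_mul_left _ _ (ENNReal.inv_ne_zero.2 hS_top) (ENNReal.inv_ne_top.2 hS)

theorem statement8_general {X ι : Type*} [MeasurableSpace X] {T : X → X} {μ : Measure X}
    [IsFiniteMeasure μ] (hT : MeasurePreserving T μ μ) {A : Set X} (hA : MeasurableSet A)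
    {E : ι → Set X} (hE : ∀ i, MeasurableSet (E i)) (hEA : ∀ i, Disjoint (E i) A)
    (hpos : ∀ i, 0 < μ (shadow T A (E i))) {l : Filter ι}
    (h0 : Tendsto (fun i => μ (shadow T A (E i))) l (𝓝 0)) (ε : ℝ) (hε : 0 < ε) :
    Tendsto (fun i => μ[|shadow T A (E i)]
      {x | ENNReal.ofReal ε / μ (shadow T A (E i)) ≤ (hitTime T (E i) x : ℝ≥0∞)})
      l (𝓝 0) := by
  have hε0 : ENNReal.ofReal ε ≠ 0 := (ENNReal.ofReal_pos.2 hε).ne'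
  have h_mean : Tendsto (fun i =>
      (∫⁻ x in shadow T A (E i), hitTime T (E i) x ∂μ) / ENNReal.ofReal ε) l (𝓝 0) := by
    simpa only [ENNReal.zero_div] using
      ENNReal.Tendsto.div_const (tendsto_setLIntegral_hitTime_shadow hT hA hEA h0) (.inr hε0)
  exact tendsto_of_tendsto_of_tendsto_of_le_of_le tendsto_const_nhds h_mean (fun _ => zero_le)
    fun i => cond_ge_div_measure_le_setLIntegral_div (hpos i).ne' (measure_ne_top μ _)
      (measurable_toENNReal_hitTime hT.measurable (hE i)).aemeasurable hε0 ENNReal.ofReal_ne_top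

/-- If the return time to `A` has exponential tails
(`μ(A ∩ {r_A > t}) ≤ C η^t`) and `(E_n)` are sets disjoint from `A` whose shadows `E'_n`
have positive measure tending to `0`, then `μ(E'_n)·r_{E_n} → 0` in
`μ_{E'_n}`-probability. -/
theorem statement8 {X : Type*} [MetricSpace X] [MeasurableSpace X] [BorelSpace X]
    (T : X → X) (μ : Measure X) [IsProbabilityMeasure μ] (hErg : Ergodic T μ)
    (A : Set X) (hA : MeasurableSet A) (hApos : 0 < μ A)
    (C : ℝ) (hC : 0 < C) (η : ℝ) (hη0 : 0 < η) (hη1 : η < 1)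
    (htail : ∀ t : ℕ, μ (A ∩ {x | (t : ℕ∞) < hitTime T A x}) ≤ ENNReal.ofReal (C * η ^ t))
    (E : ℕ → Set X) (hE : ∀ n, MeasurableSet (E n)) (hEA : ∀ n, Disjoint (E n) A)
    (hpos : ∀ n, 0 < μ (shadow T A (E n)))
    (h0 : Tendsto (fun n => μ (shadow T A (E n))) atTop (𝓝 0)) :
    ∀ ε : ℝ, 0 < ε →
      Tendsto (fun n => μ[|shadow T A (E n)]
        {x | ENNReal.ofReal ε / μ (shadow T A (E n)) ≤ (hitTime T (E n) x : ℝ≥0∞)})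
        atTop (𝓝 0) :=
  statement8_general hErg.toMeasurePreserving hA hE hEA hpos h0
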